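/- Let Q be a primitive positive-definite quaternary integer-valued quadratic form, let p be any prime, and let n be a positive integer. If there exists x ∈ ℤ_p⁴ with Q(x) = n (i.e. n is represented by Q over ℤ_p), then the local density β_p(Q;n) exists and satisfies β_p(Q;n) ≥ (1 − 1/p) · p^(−ord_p(n)), where ord_p(n) is the p-adic valuation of n. -/

import Mathlib

open scoped BigOperators

/-- Value of the quadratic form with Gram matrix `A` (symmetric, even diagonal)
over any commutative ring: `Q(x) = ∑ (aᵢᵢ/2) xᵢ² + ∑_{i<j} aᵢⱼ xᵢ xⱼ`. -/
def Qval {R : Type*} [CommRing R] (A : Matrix (Fin 4) (Fin 4) ℤ) (x : Fin 4 → R) : R :=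
  (∑ i, ((A i i / 2 : ℤ) : R) * x i ^ 2) +
    ∑ i, ∑ j ∈ Finset.Ioi i, ((A i j : ℤ) : R) * (x i * x j)

/-- `A` is the Gram matrix of an integer-valued quadratic form. -/
def IsGram (A : Matrix (Fin 4) (Fin 4) ℤ) : Prop :=
  A.IsSymm ∧ ∀ i, 2 ∣ A i i

/-- The form is primitive: the gcd of its coefficients is 1. -/
def IsPrimitiveQF (A : Matrix (Fin 4) (Fin 4) ℤ) : Prop :=
  ∀ d : ℤ, (∀ i, d ∣ A i i / 2) → (∀ i j, i ≠ j → d ∣ A i j) → IsUnit d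

/-- The form is positive definite. -/
def PosDefQF (A : Matrix (Fin 4) (Fin 4) ℤ) : Prop :=
  (A.map (Int.cast : ℤ → ℝ)).PosDef

/-- `N` is the level of the form with Gram matrix `A`: the smallest positive integer
such that `N • A⁻¹` has integer entries and even diagonal. -/
def IsLevel (A : Matrix (Fin 4) (Fin 4) ℤ) (N : ℕ) : Prop :=
  0 < N ∧
    (∃ B : Matrix (Fin 4) (Fin 4) ℤ,
      B.map (Int.cast : ℤ → ℚ) = (N : ℚ) • (A.map (Int.cast : ℤ → ℚ))⁻¹ ∧ ∀ i, 2 ∣ B i i) ∧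
    ∀ M : ℕ, 0 < M →
      (∃ B : Matrix (Fin 4) (Fin 4) ℤ,
        B.map (Int.cast : ℤ → ℚ) = (M : ℚ) • (A.map (Int.cast : ℤ → ℚ))⁻¹ ∧ ∀ i, 2 ∣ B i i) →
      N ≤ M

/-- `n` is represented by the form over `ℤ`. -/
def Represented (A : Matrix (Fin 4) (Fin 4) ℤ) (n : ℕ) : Prop :=
  ∃ x : Fin 4 → ℤ, Qval A x = (n : ℤ)

/-- `n` is locally represented: representable over `ℤ_p` for every prime `p`. -/
def LocallyRepresented (A : Matrix (Fin 4) (Fin 4) ℤ) (n : ℕ) : Prop :=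
  ∀ (p : ℕ) [Fact p.Prime], ∃ x : Fin 4 → ℤ_[p], Qval A x = (n : ℤ_[p])

/-- Number of solutions of `Q(x) ≡ n mod p^k`. -/
noncomputable def localCount (A : Matrix (Fin 4) (Fin 4) ℤ) (p n k : ℕ) : ℕ :=
  Nat.card {x : Fin 4 → ZMod (p ^ k) // Qval A x = (n : ZMod (p ^ k))}

/-- The local density `β_p(Q;n)` exists and is at least `c`. -/
def DensityBound (A : Matrix (Fin 4) (Fin 4) ℤ) (p n : ℕ) (c : ℝ) : Prop :=
  ∃ β : ℝ,
    Filter.Tendsto (fun k => (localCount A p n k : ℝ) / (p : ℝ) ^ (3 * k))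
      Filter.atTop (nhds β) ∧ c ≤ β

/-!
Write `v` for the `p`-adic valuation of `n`. Since `1 + p ^ 3 * s` is the square of a unit, for
`k ≥ v + 3` the congruences `Q x ≡ n + p ^ k * s (mod p ^ (k + 1))` have equally many solutions for
all `s`. Hence the sequence defining the density is constant from `k = v + 3` on, and it suffices to
show that the solutions modulo `p ^ (v + 3)` make up a proportion at least
`(p - 1) / p ^ (2 * v + 4)` of all vectors. Counting them through their images under an arbitrary
linear map to a finite module makes this bound pass from sublattices to the whole lattice.

If `p ∣ Q e` but `p ∤ polar Q e f` for some `e` and `f`, then by Hensel's lemma each line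
`w + ℤ_[p] • e` with `p ∤ polar Q e w` contains a solution, and the proportion of such `w` is at
least `1 - 1 / p`. Otherwise the vectors `x` with `p ∣ Q x` form a sublattice, of index at most
`p ^ 2` by the Chevalley–Warning theorem. If `p ∣ n`, all solutions lie in this sublattice, on which
`Q` can be divided by `p` or `p ^ 2`; this lowers `v` at the cost of a factor `p ^ 2` in the
proportion. If `p ∤ n`, reflecting one solution `x` in the vectors `w` with `p ∤ polar Q x w`
produces enough solutions. There are no such `w` only if `p = 2` and all values of the polar form
are even, in which case the solutions modulo `8` are counted directly.
-/

section Counting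

variable {α G ι : Type*}

theorem ncard_image_eq_of_eq_iff_eq {α β γ : Type*} {f : α → β} {g : α → γ}
    (h : ∀ x y, f x = f y ↔ g x = g y) (S : Set α) : (f '' S).ncard = (g '' S).ncard := by
  have hker : Setoid.ker (fun x : S => f x) = Setoid.ker fun x : S => g x :=
    Setoid.ext fun x y => h x y
  rw [Set.image_eq_range, Set.image_eq_range, ← Nat.card_coe_set_eq, ← Nat.card_coe_set_eq,
    ← Nat.card_congr (Setoid.quotientKerEquivRange _), hker,
    Nat.card_congr (Setoid.quotientKerEquivRange _)]

theorem mul_ncard_image_le_mul_ncard_image [Finite G] (φ : α → G) {S T : Set α}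
    {I : Finset ι} {N : ℕ} (hI : I.card ≤ N) (σ : ι → α → α) {r : ℕ}
    (hσ : ∀ i ∈ I, ∀ x y, φ (σ i x) = φ (σ i y) → φ x = φ y)
    (hr : ∀ w ∈ T, ∃ J ⊆ I, r ≤ J.card ∧ ∀ i ∈ J, σ i w ∈ S) :
    r * (φ '' T).ncard ≤ N * (φ '' S).ncard := by
  classical
  have hrep : ∀ g : φ '' T, ∃ w J, φ w = g ∧ J ⊆ I ∧ r ≤ J.card ∧ ∀ i ∈ J, σ i w ∈ S := by
    rintro ⟨-, w, hw, rfl⟩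
    obtain ⟨J, hJ⟩ := hr w hw
    exact ⟨w, J, rfl, hJ⟩
  choose w J hw hJI hJr hJS using hrep
  have := Fintype.ofFinite (φ '' T)
  have hmem : ∀ a ∈ Finset.univ.sigma J,
      (a.2, φ (σ a.2 (w a.1))) ∈ I ×ˢ (φ '' S).toFinite.toFinset
    | ⟨g, i⟩, hi => by
      have hi : i ∈ J g := (Finset.mem_sigma.1 hi).2
      simpa [hJI g hi] using ⟨σ i (w g), hJS g i hi, rfl⟩
  have hinj : Set.InjOn (fun a : (_ : φ '' T) × ι => (a.2, φ (σ a.2 (w a.1))))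
      (Finset.univ.sigma J) := by
    rintro ⟨g, i⟩ hi ⟨g', i'⟩ - h
    obtain ⟨rfl, h⟩ := Prod.ext_iff.1 h
    have hφ := hσ i (hJI g (Finset.mem_sigma.1 hi).2) _ _ h
    obtain rfl : g = g' := Subtype.ext (by rw [← hw, ← hw, hφ])
    rfl
  calc r * (φ '' T).ncard = ∑ _g : φ '' T, r := by
        rw [Finset.sum_const, Finset.card_univ, smul_eq_mul, mul_comm,
          ← Nat.card_eq_fintype_card, Nat.card_coe_set_eq]
    _ ≤ ∑ g, (J g).card := Finset.sum_le_sum fun g _ => hJr g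
    _ = (Finset.univ.sigma J).card := (Finset.card_sigma _ _).symm
    _ ≤ (I ×ˢ (φ '' S).toFinite.toFinset).card := Finset.card_le_card_of_injOn _ hmem hinj
    _ = I.card * (φ '' S).ncard := by
        rw [Finset.card_product, ← Set.ncard_eq_toFinset_card (φ '' S)]
    _ ≤ N * (φ '' S).ncard := Nat.mul_le_mul_right _ hI

theorem ncard_image_le_mul_ncard_image [Finite G] (φ : α → G) {S T : Set α}
    {I : Finset ι} {N : ℕ} (hI : I.card ≤ N) (σ : ι → α → α)
    (hσ : ∀ i ∈ I, ∀ x y, φ (σ i x) = φ (σ i y) → φ x = φ y)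
    (hT : ∀ w ∈ T, ∃ i ∈ I, σ i w ∈ S) :
    (φ '' T).ncard ≤ N * (φ '' S).ncard := by
  rw [← one_mul (φ '' T).ncard]
  refine mul_ncard_image_le_mul_ncard_image φ hI σ hσ fun w hw => ?_
  obtain ⟨i, hi, hS⟩ := hT w hw
  exact ⟨{i}, by simpa using hi, by simp, by simpa using hS⟩

variable {M H : Type*} [AddCommGroup M] [AddCommGroup G] [AddCommGroup H]

theorem ncard_range_le_card_mul_ncard_image_fiber [Finite G] [Finite H]
    (φ : M →+ G) (χ : M →+ H) (w₀ : M) :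
    (Set.range φ).ncard ≤ Nat.card H * (φ '' (χ ⁻¹' {χ w₀})).ncard := by
  have := Fintype.ofFinite H
  rw [← Set.image_univ]
  refine ncard_image_le_mul_ncard_image φ (I := Finset.univ) Nat.card_eq_fintype_card.ge
    (fun h w => w - Function.invFun χ h + w₀) (by simp) fun w _ => ⟨χ w, Finset.mem_univ _, ?_⟩
  simp [Function.invFun_eq (f := χ) ⟨w, rfl⟩]

theorem ncard_preimage_mul_card (π : G →+ H) (hπ : Function.Surjective π) (T : Set H) :
    (π ⁻¹' T).ncard * Nat.card H = T.ncard * Nat.card G := by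
  have hfiber : ∀ T : Set H, (π ⁻¹' T).ncard = T.ncard * Nat.card π.ker := by
    intro T
    obtain ⟨s, hs⟩ := hπ.hasRightInverse
    rw [← Nat.card_coe_set_eq, ← Nat.card_coe_set_eq, ← Nat.card_prod]
    exact Nat.card_congr
      { toFun x := (⟨π x, x.2⟩, ⟨x - s (π x), by simp [AddMonoidHom.mem_ker, hs (π x)]⟩)
        invFun y := ⟨s y.1 + y.2, by simp [hs _, AddMonoidHom.mem_ker.1 y.2.2]⟩
        left_inv x := by simp
        right_inv y := by simp [hs _, AddMonoidHom.mem_ker.1 y.2.2] }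
  have huniv := hfiber Set.univ
  rw [Set.preimage_univ, Set.ncard_univ, Set.ncard_univ] at huniv
  rw [hfiber, huniv]
  ring

end Counting

section PadicInt

variable {p : ℕ} [Fact p.Prime]

theorem padicInt_isUnit_iff_not_dvd {a : ℤ_[p]} : IsUnit a ↔ ¬(p : ℤ_[p]) ∣ a := by
  rw [← PadicInt.norm_lt_one_iff_dvd, ← PadicInt.not_isUnit_iff, not_not]

theorem padicInt_norm_natCast {n : ℕ} (hn : n ≠ 0) :
    ‖(n : ℤ_[p])‖ = (p : ℝ) ^ (-(n.factorization p : ℝ)) := by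
  rw [PadicInt.norm_def, PadicInt.coe_natCast,
    Padic.norm_eq_zpow_neg_valuation (Nat.cast_ne_zero.2 hn), Padic.valuation_natCast,
    Nat.factorization_def n Fact.out, Real.rpow_neg p.cast_nonneg, Real.rpow_natCast, zpow_neg,
    zpow_natCast]

theorem padicInt_toZMod_eq_iff {a b : ℤ_[p]} :
    PadicInt.toZMod a = PadicInt.toZMod b ↔ (p : ℤ_[p]) ∣ a - b := by
  rw [← sub_eq_zero, ← map_sub, ← RingHom.mem_ker, PadicInt.ker_toZMod,
    PadicInt.maximalIdeal_eq_span_p, Ideal.mem_span_singleton]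

theorem padicInt_toZModPow_eq_iff {k : ℕ} {a b : ℤ_[p]} :
    PadicInt.toZModPow k a = PadicInt.toZModPow k b ↔ (p : ℤ_[p]) ^ k ∣ a - b := by
  rw [← sub_eq_zero, ← map_sub, ← RingHom.mem_ker, PadicInt.ker_toZModPow,
    Ideal.mem_span_singleton]

theorem natCard_quotient_span_pow (k : ℕ) :
    Nat.card (ℤ_[p] ⧸ Ideal.span {(p : ℤ_[p]) ^ k}) = p ^ k := by
  rw [← PadicInt.ker_toZModPow, Nat.card_congr (RingHom.quotientKerEquivOfSurjective
    (ZMod.ringHom_surjective (PadicInt.toZModPow (p := p) k))).toEquiv, Nat.card_zmod]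

theorem exists_lt_pow_dvd_sub (t : ℤ_[p]) (k : ℕ) : ∃ s < p ^ k, (p : ℤ_[p]) ^ k ∣ t - s :=
  ⟨t.appr k, t.appr_lt k, Ideal.mem_span_singleton.1 (t.appr_spec k)⟩

open Polynomial in
theorem exists_quadratic_root {a b : ℤ_[p]} (ha : (p : ℤ_[p]) ∣ a) (hb : IsUnit b)
    (c : ℤ_[p]) : ∃ t, a * t ^ 2 + b * t + c = 0 := by
  obtain ⟨b', hb'⟩ := hb.exists_right_inv
  let F : ℤ_[p][X] := C a * X ^ 2 + C b * X + C c
  have hF : F.aeval (-(b' * c)) = a * (b' * c) ^ 2 := by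
    simp only [F, map_add, map_mul, map_pow, aeval_X, aeval_C, Algebra.algebraMap_self_apply]
    linear_combination (-c) * hb'
  have hF' : IsUnit (F.derivative.aeval (-(b' * c))) := by
    have hval : F.derivative.aeval (-(b' * c)) = a * (2 * -(b' * c)) + b := by
      simp [F, one_add_one_eq_two]
    rw [hval, padicInt_isUnit_iff_not_dvd, dvd_add_right (ha.mul_right _),
      ← padicInt_isUnit_iff_not_dvd]
    exact hb
  have hnorm : ‖F.aeval (-(b' * c))‖ < ‖F.derivative.aeval (-(b' * c))‖ ^ 2 := by
    rw [hF, PadicInt.isUnit_iff.1 hF', one_pow, PadicInt.norm_lt_one_iff_dvd]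
    exact ha.mul_right _
  obtain ⟨t, ht, -⟩ := hensels_lemma hnorm
  exact ⟨t, by simpa [F] using ht⟩

theorem four_dvd_natCast_sq : (4 : ℤ_[p]) ∣ (p : ℤ_[p]) ^ 2 := by
  rcases eq_or_ne p 2 with rfl | hp
  · norm_num
  · refine IsUnit.dvd ?_
    rw [← Nat.cast_ofNat, PadicInt.isUnit_iff, PadicInt.norm_natCast_eq_one_iff]
    exact ((Nat.coprime_primes Fact.out Nat.prime_two).2 hp).pow_right 2

theorem exists_unit_sq_eq_one_add_pow_three_mul (s : ℤ_[p]) :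
    ∃ u : ℤ_[p]ˣ, (u : ℤ_[p]) ^ 2 = 1 + (p : ℤ_[p]) ^ 3 * s := by
  obtain ⟨c, hc⟩ := four_dvd_natCast_sq (p := p)
  obtain ⟨r, hr⟩ := exists_quadratic_root (dvd_refl (p : ℤ_[p])) isUnit_one (-(c * s))
  have hu : IsUnit (1 + 2 * p * r : ℤ_[p]) := by
    rw [padicInt_isUnit_iff_not_dvd, dvd_add_left ⟨2 * r, by ring⟩]
    exact PadicInt.prime_p.not_dvd_one
  refine ⟨hu.unit, ?_⟩
  rw [IsUnit.unit_spec]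
  linear_combination 4 * p * hr - p * s * hc

end PadicInt

section Quotient

theorem mem_span_singleton_smul_top {R M : Type*} [CommRing R] [AddCommGroup M] [Module R M]
    {a : R} {x : M} : x ∈ Ideal.span {a} • (⊤ : Submodule R M) ↔ ∃ y, a • y = x := by
  simp [Submodule.ideal_span_singleton_smul, Submodule.mem_smul_pointwise_iff_exists]

theorem natCard_quotient_smul_top {R : Type*} [CommRing R] (I : Ideal R) (M : Type*)
    [AddCommGroup M] [Module R M] [StrongRankCondition R] [Module.Free R M] [Module.Finite R M] :
    Nat.card (M ⧸ I • (⊤ : Submodule R M)) = Nat.card (R ⧸ I) ^ Module.finrank R M := by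
  let b := (Module.finBasis R M).baseChange (R ⧸ I)
  rw [← Nat.card_congr (TensorProduct.quotTensorEquivQuotSMul M I).toEquiv,
    Nat.card_congr b.equivFun.toEquiv, Nat.card_fun, Nat.card_fin]

variable {p : ℕ} [Fact p.Prime]

theorem natCard_quotient_span_pow_smul_top (M : Type*) [AddCommGroup M] [Module ℤ_[p] M]
    [Module.Free ℤ_[p] M] [Module.Finite ℤ_[p] M] (k : ℕ) :
    Nat.card (M ⧸ Ideal.span {(p : ℤ_[p]) ^ k} • (⊤ : Submodule ℤ_[p] M)) =
      p ^ (k * Module.finrank ℤ_[p] M) := by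
  rw [natCard_quotient_smul_top, natCard_quotient_span_pow, pow_mul]

instance finite_quotient_span_pow_smul_top (M : Type*) [AddCommGroup M] [Module ℤ_[p] M]
    [Module.Free ℤ_[p] M] [Module.Finite ℤ_[p] M] (k : ℕ) :
    Finite (M ⧸ Ideal.span {(p : ℤ_[p]) ^ k} • (⊤ : Submodule ℤ_[p] M)) :=
  Nat.finite_of_card_ne_zero <| by
    rw [natCard_quotient_span_pow_smul_top]
    exact pow_ne_zero _ (Fact.out : p.Prime).ne_zero

end Quotient

section Lines

open QuadraticMap

theorem quadraticForm_map_add_smul {R M : Type*} [CommRing R] [AddCommGroup M] [Module R M]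
    (Q : QuadraticForm R M) (x y : M) (t : R) :
    Q (x + t • y) = Q x + t * polar Q x y + t ^ 2 * Q y := by
  rw [QuadraticMap.map_add Q, QuadraticMap.map_smul, polar_smul_right, smul_eq_mul, smul_eq_mul]
  ring

theorem dvd_quadraticForm_map_add_smul_sub {R M : Type*} [CommRing R] [AddCommGroup M]
    [Module R M] (Q : QuadraticForm R M) {a t : R} (h : a ∣ t) (x y : M) :
    a ∣ Q (x + t • y) - Q x := by
  rw [quadraticForm_map_add_smul]
  exact h.trans ⟨polar Q x y + t * Q y, by ring⟩

variable {p : ℕ} [Fact p.Prime] {M : Type*} [AddCommGroup M] [Module ℤ_[p] M]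

/-- The solutions in `M` of the congruence `Q x ≡ n (mod p ^ k)`. -/
def solutionSet (Q : QuadraticForm ℤ_[p] M) (n : ℤ_[p]) (k : ℕ) : Set M :=
  {x | (p : ℤ_[p]) ^ k ∣ Q x - n}

theorem add_smul_mem_solutionSet_iff {Q : QuadraticForm ℤ_[p] M} {n : ℤ_[p]} {k : ℕ} {x y : M}
    {t : ℤ_[p]} (h : (p : ℤ_[p]) ^ k ∣ t) :
    x + t • y ∈ solutionSet Q n k ↔ x ∈ solutionSet Q n k := by
  simp only [solutionSet, Set.mem_ofPred_eq]
  rw [← sub_add_sub_cancel _ (Q x), dvd_add_right (dvd_quadraticForm_map_add_smul_sub Q h x y)]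

theorem exists_lt_add_smul_mem_solutionSet {Q : QuadraticForm ℤ_[p] M} {n : ℤ_[p]} {k : ℕ}
    {x y : M} {t : ℤ_[p]} (h : x + t • y ∈ solutionSet Q n k) :
    ∃ s < p ^ k, (p : ℤ_[p]) ^ k ∣ t - s ∧ x + (s : ℤ_[p]) • y ∈ solutionSet Q n k := by
  obtain ⟨s, hs, hts⟩ := exists_lt_pow_dvd_sub t k
  refine ⟨s, hs, hts, (add_smul_mem_solutionSet_iff (y := y) hts).1 ?_⟩
  rwa [add_assoc, ← add_smul, add_sub_cancel]

variable {G : Type*} [AddCommGroup G] [Module ℤ_[p] G] [Finite G] (φ : M →ₗ[ℤ_[p]] G)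

theorem sub_one_mul_ncard_range_le_mul_ncard_image_not_dvd (l : M →ₗ[ℤ_[p]] ℤ_[p]) {f : M}
    (hf : ¬(p : ℤ_[p]) ∣ l f) :
    (p - 1) * (Set.range φ).ncard ≤ p * (φ '' {w | ¬(p : ℤ_[p]) ∣ l w}).ncard := by
  rw [← Set.image_univ]
  refine mul_ncard_image_le_mul_ncard_image φ (Finset.card_range p).le (fun s w => w + s • f)
    (by simp) fun w _ => ?_
  obtain ⟨g, hg⟩ := (padicInt_isUnit_iff_not_dvd.2 hf).exists_left_inv
  obtain ⟨s₀, hs₀, hs₀'⟩ := exists_lt_pow_dvd_sub (-(g * l w)) 1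
  rw [pow_one] at hs₀ hs₀'
  refine ⟨(Finset.range p).erase s₀, Finset.erase_subset _ _, ?_, fun s hs hdvd => ?_⟩
  · rw [Finset.card_erase_of_mem (Finset.mem_range.2 hs₀), Finset.card_range]
  · obtain ⟨hne, hlt⟩ := Finset.mem_erase.1 hs
    refine hne (Nat.ModEq.eq_of_lt_of_lt (m := p) ?_ (Finset.mem_range.1 hlt) hs₀)
    have hs : (p : ℤ_[p]) ∣ l w + s * l f := by simpa [not_not] using hdvd
    have hsub : (p : ℤ_[p]) ^ 1 ∣ ((s - s₀ : ℤ) : ℤ_[p]) := by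
      rw [pow_one]
      convert (hs.mul_left g).add hs₀' using 1
      push_cast
      linear_combination (-s : ℤ_[p]) * hg
    rw [PadicInt.pow_p_dvd_int_iff, pow_one] at hsub
    exact (Nat.modEq_iff_dvd.2 hsub).symm

theorem ncard_image_not_dvd_polar_le_of_dvd {Q : QuadraticForm ℤ_[p] M} {e : M}
    (he : (p : ℤ_[p]) ∣ Q e) (n : ℤ_[p]) (k : ℕ) :
    (φ '' {w | ¬(p : ℤ_[p]) ∣ polar Q e w}).ncard ≤ p ^ k * (φ '' solutionSet Q n k).ncard := by
  refine ncard_image_le_mul_ncard_image φ (Finset.card_range (p ^ k)).le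
    (fun s w => w + (s : ℤ_[p]) • e) (by simp) fun w hw => ?_
  obtain ⟨t, ht⟩ := exists_quadratic_root he (padicInt_isUnit_iff_not_dvd.2 hw) (Q w - n)
  have hwt : w + t • e ∈ solutionSet Q n k := by
    refine ⟨0, ?_⟩
    rw [quadraticForm_map_add_smul, polar_comm]
    linear_combination ht
  obtain ⟨s, hs, -, hmem⟩ := exists_lt_add_smul_mem_solutionSet hwt
  exact ⟨s, Finset.mem_range.2 hs, hmem⟩

theorem sub_one_mul_ncard_range_le_of_dvd {Q : QuadraticForm ℤ_[p] M} {e f : M}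
    (he : (p : ℤ_[p]) ∣ Q e) (hef : ¬(p : ℤ_[p]) ∣ polar Q e f) (n : ℤ_[p]) (k : ℕ) :
    (p - 1) * (Set.range φ).ncard ≤ p ^ (k + 1) * (φ '' solutionSet Q n k).ncard :=
  calc (p - 1) * (Set.range φ).ncard
      ≤ p * (φ '' {w | ¬(p : ℤ_[p]) ∣ polar Q e w}).ncard :=
        sub_one_mul_ncard_range_le_mul_ncard_image_not_dvd φ (Q.polarBilin e) hef
    _ ≤ p * (p ^ k * (φ '' solutionSet Q n k).ncard) :=
        Nat.mul_le_mul_left p (ncard_image_not_dvd_polar_le_of_dvd φ he n k)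
    _ = p ^ (k + 1) * (φ '' solutionSet Q n k).ncard := by ring

/-- Every zero of the reduction of `Q` modulo `p` lies in the radical of the reduction of its polar
form; equivalently, the quadratic form induced modulo that radical is anisotropic. -/
def AnisotropicModRadical (Q : QuadraticForm ℤ_[p] M) : Prop :=
  ∀ e f, (p : ℤ_[p]) ∣ Q e → (p : ℤ_[p]) ∣ polar Q e f

theorem exists_reflection_mem_solutionSet {Q : QuadraticForm ℤ_[p] M} {n : ℤ_[p]} {k : ℕ} {x w : M}
    (hx : x ∈ solutionSet Q n k) (hw : IsUnit (Q w)) (hxw : ¬(p : ℤ_[p]) ∣ polar Q x w) :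
    ∃ t : ℤ_[p], IsUnit t ∧ x + t • w ∈ solutionSet Q n k := by
  obtain ⟨b, hb⟩ := hw.exists_right_inv
  refine ⟨-(polar Q x w * b),
    ((padicInt_isUnit_iff_not_dvd.2 hxw).mul (.of_mul_eq_one_right _ hb)).neg, ?_⟩
  have hreflect : Q (x + (-(polar Q x w * b)) • w) = Q x := by
    rw [quadraticForm_map_add_smul]
    linear_combination (polar Q x w ^ 2 * b) * hb
  rwa [solutionSet, Set.mem_ofPred_eq, hreflect]

theorem ncard_image_not_dvd_polar_le_of_mem {Q : QuadraticForm ℤ_[p] M}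
    (hQ : AnisotropicModRadical Q) {x : M} {n : ℤ_[p]} {k : ℕ} (hk : k ≠ 0)
    (hx : x ∈ solutionSet Q n k) :
    (φ '' {w | ¬(p : ℤ_[p]) ∣ polar Q x w}).ncard ≤ p ^ k * (φ '' solutionSet Q n k).ncard := by
  classical
  refine ncard_image_le_mul_ncard_image φ
    (I := (Finset.range (p ^ k)).filter fun s : ℕ => IsUnit (s : ℤ_[p]))
    ((Finset.card_filter_le _ _).trans_eq (Finset.card_range _))
    (fun s w => x + (s : ℤ_[p]) • w) ?_ fun w hw => ?_
  · simp only [Finset.mem_filter, map_add, map_smul, add_right_inj, and_imp]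
    exact fun s _ hs _ _ h => hs.smul_left_cancel.1 h
  have hQw : IsUnit (Q w) := padicInt_isUnit_iff_not_dvd.2 fun h =>
    hw (by simpa [polar_comm] using hQ w x h)
  obtain ⟨t, ht, hreflect⟩ := exists_reflection_mem_solutionSet hx hQw hw
  obtain ⟨s, hs, hts, hmem⟩ := exists_lt_add_smul_mem_solutionSet hreflect
  refine ⟨s, Finset.mem_filter.2 ⟨Finset.mem_range.2 hs, ?_⟩, hmem⟩
  rw [padicInt_isUnit_iff_not_dvd] at ht ⊢
  exact fun h => ht ((dvd_sub_left h).1 ((dvd_pow_self _ hk).trans hts))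

theorem sub_one_mul_ncard_range_le_of_not_dvd_polar {Q : QuadraticForm ℤ_[p] M}
    (hQ : AnisotropicModRadical Q) {x f : M} {n : ℤ_[p]} {k : ℕ} (hk : k ≠ 0)
    (hx : x ∈ solutionSet Q n k) (hxf : ¬(p : ℤ_[p]) ∣ polar Q x f) :
    (p - 1) * (Set.range φ).ncard ≤ p ^ (k + 1) * (φ '' solutionSet Q n k).ncard :=
  calc (p - 1) * (Set.range φ).ncard
      ≤ p * (φ '' {w | ¬(p : ℤ_[p]) ∣ polar Q x w}).ncard :=
        sub_one_mul_ncard_range_le_mul_ncard_image_not_dvd φ (Q.polarBilin x) hxf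
    _ ≤ p * (p ^ k * (φ '' solutionSet Q n k).ncard) :=
        Nat.mul_le_mul_left p (ncard_image_not_dvd_polar_le_of_mem φ hQ hk hx)
    _ = p ^ (k + 1) * (φ '' solutionSet Q n k).ncard := by ring

end Lines

section Division

open QuadraticMap

variable {R M : Type*} [CommRing R] [IsDomain R] [AddCommGroup M] [Module R M] {a : R}

theorem exists_linearMap_of_forall_dvd (ha : a ≠ 0) {l : M →ₗ[R] R} (h : ∀ x, a ∣ l x) :
    ∃ l' : M →ₗ[R] R, ∀ x, l x = a * l' x := by
  choose f hf using h
  refine ⟨{ toFun := f, map_add' x y := ?_, map_smul' r x := ?_ }, hf⟩ <;>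
    refine mul_left_cancel₀ ha ?_
  · rw [mul_add, ← hf, ← hf, ← hf, map_add]
  · rw [smul_eq_mul, mul_left_comm, RingHom.id_apply, ← hf, ← hf, map_smul, smul_eq_mul]

theorem exists_quadraticForm_of_forall_dvd (ha : a ≠ 0) {Q : QuadraticForm R M}
    (h : ∀ x, a ∣ Q x) :
    ∃ Q' : QuadraticForm R M, ∀ x, Q x = a * Q' x := by
  choose f hf using h
  have hpolar : ∀ x y, polar Q x y = a * polar f x y := fun x y => by
    simp only [polar, hf]; ring
  refine ⟨ofPolar f (fun r x => ?_) (fun x x' y => ?_) (fun r x y => ?_), hf⟩ <;>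
    refine mul_left_cancel₀ ha ?_
  · rw [← hf, QuadraticMap.map_smul, hf, smul_eq_mul, smul_eq_mul]
    ring
  · rw [mul_add, ← hpolar, ← hpolar, ← hpolar, polar_add_left]
  · rw [smul_eq_mul, mul_left_comm, ← hpolar, ← hpolar, polar_smul_left, smul_eq_mul]

end Division

section Residues

open QuadraticMap

variable {p : ℕ} [Fact p.Prime] {M : Type*} [AddCommGroup M] [Module ℤ_[p] M]

theorem exists_addMonoidHom_toZMod {Q : QuadraticForm ℤ_[p] M}
    (hQ : ∀ x y, (p : ℤ_[p]) ∣ polar Q x y) :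
    ∃ χ : M →+ ZMod p, ∀ x, χ x = PadicInt.toZMod (Q x) :=
  ⟨AddMonoidHom.mk' (fun x => PadicInt.toZMod (Q x)) fun x y => by
    obtain ⟨c, hc⟩ := hQ x y
    simp [QuadraticMap.map_add Q x y, hc], fun _ => rfl⟩

theorem ncard_range_le_sq_mul_ncard_image_congr {G : Type*} [AddCommGroup G] [Finite G]
    (φ : M →+ G) {Q : QuadraticForm ℤ_[p] M} (hQ : ∀ x y, (p : ℤ_[p]) ∣ polar Q x y)
    (l : M →ₗ[ℤ_[p]] ℤ_[p]) (x : M) :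
    (Set.range φ).ncard ≤ p ^ 2 *
      (φ '' {y | (p : ℤ_[p]) ∣ Q y - Q x ∧ (p : ℤ_[p]) ∣ l y - l x}).ncard := by
  obtain ⟨χ, hχ⟩ := exists_addMonoidHom_toZMod hQ
  convert ncard_range_le_card_mul_ncard_image_fiber φ
    (χ.prod (PadicInt.toZMod.toAddMonoidHom.comp l.toAddMonoidHom)) x using 3
  · simp [pow_two]
  · congr 1
    ext y
    simp [hχ, padicInt_toZMod_eq_iff]

end Residues

section Dyadic

open QuadraticMap

theorem odd_iff_not_two_dvd {a : ℤ_[2]} : Odd a ↔ ¬2 ∣ a := by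
  refine ⟨?_, fun h => ?_⟩
  · rintro ⟨b, rfl⟩
    rw [dvd_add_right (dvd_mul_right 2 b)]
    exact_mod_cast PadicInt.prime_p.not_dvd_one
  obtain ⟨s, hs, b, hb⟩ := exists_lt_pow_dvd_sub a 1
  obtain rfl | rfl : s = 0 ∨ s = 1 := by omega
  · exact absurd ⟨b, by simpa using hb⟩ h
  · exact ⟨b, by simpa [sub_eq_iff_eq_add] using hb⟩

theorem four_dvd_add_or_four_dvd_sub {a b : ℤ_[2]} (ha : Odd a) (hb : Odd b) :
    4 ∣ a + b ∨ 4 ∣ a - b := by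
  obtain ⟨a, rfl⟩ := ha
  obtain ⟨b, rfl⟩ := hb
  by_cases h : 2 ∣ a + b
  · obtain ⟨c, hc⟩ := h
    exact .inr ⟨c - b, by linear_combination 2 * hc⟩
  · obtain ⟨c, hc⟩ := odd_iff_not_two_dvd.2 h
    exact .inl ⟨c + 1, by linear_combination 2 * hc⟩

variable {M : Type*} [AddCommGroup M] [Module ℤ_[2] M] {Q : QuadraticForm ℤ_[2] M} {n : ℤ_[2]}

theorem mem_solutionSet_three_iff {x : M} : x ∈ solutionSet Q n 3 ↔ 8 ∣ Q x - n := by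
  norm_num [solutionSet]

theorem exists_two_dvd_map_not_four_dvd_polar (hQ : ∀ x y, 2 ∣ polar Q x y) {x y : M}
    (hx : Odd (Q x)) (hy : ¬4 ∣ polar Q x y + 2 * Q y) :
    ∃ e, 2 ∣ Q e ∧ ¬4 ∣ polar Q x e := by
  by_cases h : 2 ∣ Q y
  · obtain ⟨c, hc⟩ := h
    exact ⟨y, ⟨c, hc⟩, fun h4 => hy (h4.add ⟨c, by rw [hc]; ring⟩)⟩
  · have hxy := hx.add_odd (odd_iff_not_two_dvd.2 h)
    refine ⟨x + y, ?_, fun h4 => hy ?_⟩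
    · rw [QuadraticMap.map_add Q]
      exact hxy.two_dvd.add (hQ x y)
    · rw [polar_add_right, polar_self, nsmul_eq_mul] at h4
      obtain ⟨c, hc⟩ := hxy.two_dvd
      obtain ⟨d, hd⟩ := h4
      exact ⟨d - c + Q y, by push_cast at hd; linear_combination hd - 2 * hc⟩

variable {G : Type*} [AddCommGroup G] [Module ℤ_[2] G] [Finite G] (φ : M →ₗ[ℤ_[2]] G)

theorem ncard_range_le_two_pow_mul_of_four_dvd [Module.Free ℤ_[2] M] [Module.Finite ℤ_[2] M]
    {x : M} (hx : x ∈ solutionSet Q n 3) (h : ∀ y, 4 ∣ polar Q x y + 2 * Q y) :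
    (Set.range φ).ncard ≤
      2 ^ Module.finrank ℤ_[2] M * (φ '' solutionSet Q n 3).ncard := by
  let N : Submodule ℤ_[2] M := Ideal.span {((2 : ℕ) : ℤ_[2]) ^ 1} • ⊤
  have hcard : Nat.card (M ⧸ N) = 2 ^ Module.finrank ℤ_[2] M := by
    rw [natCard_quotient_span_pow_smul_top, one_mul]
  rw [← hcard]
  refine (ncard_range_le_card_mul_ncard_image_fiber φ.toAddMonoidHom N.mkQ.toAddMonoidHom x).trans
    (Nat.mul_le_mul_left _ (Set.ncard_le_ncard (Set.image_mono ?_)))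
  intro w hw
  obtain ⟨y, hy⟩ := mem_span_singleton_smul_top.1 ((Submodule.Quotient.eq N).1 hw)
  obtain ⟨c, hc⟩ := h y
  obtain ⟨d, hd⟩ := mem_solutionSet_three_iff.1 hx
  obtain rfl : w = x + (2 : ℤ_[2]) • y := by simpa [sub_eq_iff_eq_add'] using hy.symm
  refine mem_solutionSet_three_iff.2 ⟨c + d, ?_⟩
  rw [quadraticForm_map_add_smul]
  linear_combination 2 * hc + hd

theorem ncard_range_le_of_four_dvd_map (hQ : ∀ x y, 2 ∣ polar Q x y) {x e : M}
    (hxn : x ∈ solutionSet Q n 3) (he : 4 ∣ Q e) (hxe : ¬4 ∣ polar Q x e) :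
    (Set.range φ).ncard ≤ 16 * (φ '' solutionSet Q n 3).ncard := by
  -- For `w` with `Q w ≡ Q x` and `l w ≡ l x` modulo `2`, the line `w + ℤ_[2] • e` meets the
  -- solution set: `Q (w + t • e) - n` is twice a quadratic polynomial in `t` with odd linear term.
  obtain ⟨l, hl⟩ := exists_linearMap_of_forall_dvd two_ne_zero (l := Q.polarBilin e) (hQ e)
  simp only [polarBilin_apply_apply] at hl
  have hlx : Odd (l x) := odd_iff_not_two_dvd.2 fun ⟨c, hc⟩ =>
    hxe ⟨c, by rw [polar_comm, hl, hc]; ring⟩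
  obtain ⟨q, hq⟩ := he
  have hparity := ncard_range_le_sq_mul_ncard_image_congr φ.toAddMonoidHom
    (by exact_mod_cast hQ) l x
  have hcover := ncard_image_le_mul_ncard_image φ (T := {y | ((2 : ℕ) : ℤ_[2]) ∣ Q y - Q x ∧
    ((2 : ℕ) : ℤ_[2]) ∣ l y - l x}) (S := solutionSet Q n 3) (Finset.card_range 4).le
    (fun s w => w + (s : ℤ_[2]) • e) (by simp) fun w ⟨hwQ, hwl⟩ => ?_
  · exact hparity.trans ((Nat.mul_le_mul_left _ hcover).trans_eq (by ring))
  rw [Nat.cast_ofNat] at hwQ hwl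
  have hlw : IsUnit (l w) := padicInt_isUnit_iff_not_dvd.2 <| odd_iff_not_two_dvd.1 <| by
    simpa using hlx.add_even (even_iff_two_dvd.2 hwl)
  obtain ⟨c, hc⟩ : 2 ∣ Q w - n := by
    simpa using hwQ.add ((show (2 : ℤ_[2]) ∣ 8 from ⟨4, by norm_num⟩).trans
      (mem_solutionSet_three_iff.1 hxn))
  obtain ⟨t, ht⟩ := exists_quadratic_root ⟨q, rfl⟩ hlw c
  obtain ⟨s, hs4, r, hr⟩ := exists_lt_pow_dvd_sub t 2
  refine ⟨s, Finset.mem_range.2 hs4, mem_solutionSet_three_iff.2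
    ⟨q * r * (8 * r - 4 * t) - l w * r, ?_⟩⟩
  have hs : (s : ℤ_[2]) = t - 4 * r := by
    push_cast at hr
    linear_combination -hr
  rw [quadraticForm_map_add_smul, polar_comm, hl, hq, hs]
  push_cast at ht
  linear_combination 2 * ht + hc

theorem ncard_range_le_of_forall_not_four_dvd_map (hQ : ∀ x y, 2 ∣ polar Q x y) {x e : M}
    (hxn : x ∈ solutionSet Q n 3) (he : 2 ∣ Q e) (hxe : ¬4 ∣ polar Q x e)
    (h : ∀ y, 2 ∣ Q y → ¬4 ∣ polar Q x y → ¬4 ∣ Q y) :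
    (Set.range φ).ncard ≤ 8 * (φ '' solutionSet Q n 3).ncard := by
  -- For `y` with `Q y ≡ Q e` and `l y ≡ l e` modulo `2`, both `Q y / 2` and `l y` are odd, so
  -- `Q (x ± y) - Q x = 2 * (Q y / 2 ± l y)` vanishes modulo `8` for one of the two signs.
  obtain ⟨l, hl⟩ := exists_linearMap_of_forall_dvd two_ne_zero (l := Q.polarBilin x) (hQ x)
  simp only [polarBilin_apply_apply] at hl
  have hle : Odd (l e) := odd_iff_not_two_dvd.2 fun ⟨c, hc⟩ =>
    hxe ⟨c, by rw [hl, hc]; ring⟩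
  have hparity := ncard_range_le_sq_mul_ncard_image_congr φ.toAddMonoidHom
    (by exact_mod_cast hQ) l e
  have hcover := ncard_image_le_mul_ncard_image φ (T := {y | ((2 : ℕ) : ℤ_[2]) ∣ Q y - Q e ∧
    ((2 : ℕ) : ℤ_[2]) ∣ l y - l e}) (S := solutionSet Q n 3) (I := Finset.univ)
    Fintype.card_units_int.le (fun u y => x + u • y) ?_ fun y ⟨hyQ, hyl⟩ => ?_
  · exact hparity.trans ((Nat.mul_le_mul_left _ hcover).trans_eq (by ring))
  · simp [Units.smul_def]
  rw [Nat.cast_ofNat] at hyQ hyl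
  have hly : Odd (l y) := by
    simpa using (even_iff_two_dvd.2 hyl).add_odd hle
  obtain ⟨q, hq⟩ : 2 ∣ Q y := by simpa using hyQ.add he
  have hqodd : Odd q := odd_iff_not_two_dvd.2 fun ⟨c, hc⟩ =>
    h y ⟨q, hq⟩ (fun ⟨d, hd⟩ => odd_iff_not_two_dvd.1 hly ⟨d, mul_left_cancel₀ two_ne_zero
      (by linear_combination hd - hl y)⟩) ⟨c, by rw [hq, hc]; ring⟩
  obtain ⟨d, hd⟩ := mem_solutionSet_three_iff.1 hxn
  rcases four_dvd_add_or_four_dvd_sub hly hqodd with ⟨c, hc⟩ | ⟨c, hc⟩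
  · refine ⟨1, Finset.mem_univ _, mem_solutionSet_three_iff.2 ⟨d + c, ?_⟩⟩
    rw [one_smul, QuadraticMap.map_add Q, hl, hq]
    linear_combination hd + 2 * hc
  · refine ⟨-1, Finset.mem_univ _, mem_solutionSet_three_iff.2 ⟨d - c, ?_⟩⟩
    rw [Units.neg_smul, one_smul, QuadraticMap.map_add Q, polar_neg_right,
      QuadraticMap.map_neg, hl, hq]
    linear_combination hd - 2 * hc

theorem ncard_range_le_sixteen_mul [Module.Free ℤ_[2] M] [Module.Finite ℤ_[2] M]
    (hM : Module.finrank ℤ_[2] M ≤ 4) (hQ : ∀ x y, 2 ∣ polar Q x y) {x : M} (hx : Odd (Q x))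
    (hxn : x ∈ solutionSet Q n 3) :
    (Set.range φ).ncard ≤ 16 * (φ '' solutionSet Q n 3).ncard := by
  by_cases h₁ : ∀ y, 4 ∣ polar Q x y + 2 * Q y
  · exact (ncard_range_le_two_pow_mul_of_four_dvd φ hxn h₁).trans
      (Nat.mul_le_mul_right _ (Nat.pow_le_pow_right two_pos hM))
  push Not at h₁
  obtain ⟨y, hy⟩ := h₁
  obtain ⟨e, he, hxe⟩ := exists_two_dvd_map_not_four_dvd_polar hQ hx hy
  by_cases h₂ : ∀ y, 2 ∣ Q y → ¬4 ∣ polar Q x y → ¬4 ∣ Q y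
  · exact (ncard_range_le_of_forall_not_four_dvd_map φ hQ hxn he hxe h₂).trans
      (Nat.mul_le_mul_right _ (by norm_num))
  · push Not at h₂
    obtain ⟨e, -, hxe, he⟩ := h₂
    exact ncard_range_le_of_four_dvd_map φ hQ hxn he hxe

end Dyadic

section Sublattice

open QuadraticMap

theorem natCard_le_pow_of_exists_relation {p d : ℕ} [Fact p.Prime] {V : Type*} [AddCommGroup V]
    [Finite V] (htorsion : ∀ y : V, p • y = 0)
    (h : ∀ v : Fin (d + 1) → V, ∃ z : Fin (d + 1) → ℕ, (∃ i, ¬p ∣ z i) ∧ ∑ i, z i • v i = 0) :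
    Nat.card V ≤ p ^ d := by
  have : Module (ZMod p) V := AddCommGroup.zmodModule htorsion
  rw [Module.natCard_eq_pow_finrank (K := ZMod p), Nat.card_zmod]
  refine Nat.pow_le_pow_right (Fact.out : p.Prime).pos (not_lt.1 fun hlt => ?_)
  obtain ⟨v, hv⟩ := exists_linearIndependent_of_le_finrank (Nat.succ_le_of_lt hlt)
  obtain ⟨z, ⟨i, hi⟩, hz⟩ := h v
  simp_rw [← Nat.cast_smul_eq_nsmul (ZMod p)] at hz
  exact hi ((ZMod.natCast_eq_zero_iff _ _).1 (Fintype.linearIndependent_iff.1 hv _ hz i))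

variable {p : ℕ} [Fact p.Prime] {M : Type*} [AddCommGroup M] [Module ℤ_[p] M]

open MvPolynomial in
theorem exists_dvd_map_sum_nsmul [Module.Free ℤ_[p] M] (Q : QuadraticForm ℤ_[p] M) {ι : Type*}
    [Fintype ι] (hι : 2 < Fintype.card ι) (v : ι → M) :
    ∃ z : ι → ℕ, (∃ i, ¬p ∣ z i) ∧ (p : ℤ_[p]) ∣ Q (∑ i, z i • v i) := by
  classical
  obtain ⟨B, rfl⟩ := LinearMap.BilinMap.toQuadraticMap_surjective Q
  let F : MvPolynomial ι (ZMod p) := ∑ i, ∑ j, C (PadicInt.toZMod (B (v i) (v j))) * (X i * X j)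
  have hF : F.totalDegree ≤ 2 :=
    totalDegree_finsetSum_le fun i _ => totalDegree_finsetSum_le fun j _ =>
      (totalDegree_mul _ _).trans <| by
        simpa using totalDegree_mul (X i : MvPolynomial ι (ZMod p)) (X j)
  have heval : ∀ z : ι → ℕ, F.eval (fun i => (z i : ZMod p)) =
      PadicInt.toZMod (B (∑ i, z i • v i) (∑ i, z i • v i)) := by
    intro z
    simp only [F, map_sum, map_mul, eval_C, eval_X, LinearMap.sum_apply, map_nsmul,
      LinearMap.smul_apply, nsmul_eq_mul, map_natCast, Finset.mul_sum]
    rw [Finset.sum_comm]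
    exact Finset.sum_congr rfl fun i _ => Finset.sum_congr rfl fun j _ => by ring
  have hdvd := char_dvd_card_solutions p (hF.trans_lt hι)
  have hzero : F.eval (0 : ι → ZMod p) = 0 := by simpa using heval 0
  have hcard := Nat.le_of_dvd (Fintype.card_pos_iff.2 ⟨⟨0, hzero⟩⟩) hdvd
  obtain ⟨⟨z, hz⟩, hne⟩ :=
    Fintype.exists_ne_of_one_lt_card ((Fact.out : p.Prime).one_lt.trans_le hcard) ⟨0, hzero⟩
  refine ⟨fun i => (z i).val, ?_, ?_⟩
  · obtain ⟨i, hi⟩ := Function.ne_iff.1 (Subtype.coe_ne_coe.2 hne)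
    exact ⟨i, fun h => hi (by simpa using (ZMod.natCast_eq_zero_iff _ _).2 h)⟩
  · have := heval fun i => (z i).val
    simp only [ZMod.natCast_zmod_val, hz] at this
    rwa [eq_comm, ← map_zero PadicInt.toZMod, padicInt_toZMod_eq_iff, sub_zero] at this

/-- The submodule of vectors on which `Q` vanishes modulo `p`; it is closed under addition when
`Q` is anisotropic modulo the radical of its reduction. -/
def divisibleSubmodule (Q : QuadraticForm ℤ_[p] M)
    (hQ : AnisotropicModRadical Q) : Submodule ℤ_[p] M where
  carrier := {x | (p : ℤ_[p]) ∣ Q x}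
  zero_mem' := by simp
  add_mem' {x y} hx hy := by
    rw [Set.mem_ofPred_eq, QuadraticMap.map_add Q]
    exact (dvd_add hx hy).add (hQ x y hx)
  smul_mem' a x hx := by
    rw [Set.mem_ofPred_eq, QuadraticMap.map_smul]
    exact hx.mul_left _

variable {Q : QuadraticForm ℤ_[p] M} (hQ : AnisotropicModRadical Q)

theorem smul_mem_divisibleSubmodule (x : M) : (p : ℤ_[p]) • x ∈ divisibleSubmodule Q hQ :=
  show (p : ℤ_[p]) ∣ _ by
    rw [QuadraticMap.map_smul]
    exact ⟨p * Q x, by ring⟩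

variable [Module.Free ℤ_[p] M] [Module.Finite ℤ_[p] M]

instance finite_quotient_divisibleSubmodule : Finite (M ⧸ divisibleSubmodule Q hQ) := by
  let N : Submodule ℤ_[p] M := Ideal.span {(p : ℤ_[p]) ^ 1} • ⊤
  have hN : N ≤ divisibleSubmodule Q hQ := fun x hx => by
    obtain ⟨y, rfl⟩ := mem_span_singleton_smul_top.1 hx
    simpa using smul_mem_divisibleSubmodule hQ y
  exact Finite.of_surjective _ (Submodule.factor_surjective hN)

theorem natCard_quotient_divisibleSubmodule_le :
    Nat.card (M ⧸ divisibleSubmodule Q hQ) ≤ p ^ 2 := by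
  refine natCard_le_pow_of_exists_relation (fun y => ?_) fun v => ?_
  · obtain ⟨x, rfl⟩ := Submodule.mkQ_surjective _ y
    rw [← map_nsmul, ← Nat.cast_smul_eq_nsmul ℤ_[p]]
    exact (Submodule.Quotient.mk_eq_zero _).2 (smul_mem_divisibleSubmodule hQ x)
  · choose w hw using fun i => Submodule.mkQ_surjective _ (v i)
    obtain ⟨z, hz, hdvd⟩ := exists_dvd_map_sum_nsmul Q (by simp) w
    refine ⟨z, hz, ?_⟩
    simp_rw [← hw, ← map_nsmul, ← map_sum]
    exact (Submodule.Quotient.mk_eq_zero _).2 hdvd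

end Sublattice

section Bound

open QuadraticMap

variable {p : ℕ} [Fact p.Prime] {M : Type*} [AddCommGroup M] [Module ℤ_[p] M]
  {Q : QuadraticForm ℤ_[p] M}

theorem exists_eq_pow_mul_on_divisibleSubmodule
    (hQ : AnisotropicModRadical Q)
    {e : M} (he : ¬(p : ℤ_[p]) ∣ Q e) :
    ∃ c ≠ 0, ∃ Q' : QuadraticForm ℤ_[p] (divisibleSubmodule Q hQ),
      (∀ x : divisibleSubmodule Q hQ, Q x = (p : ℤ_[p]) ^ c * Q' x) ∧ ∃ x, ¬(p : ℤ_[p]) ∣ Q' x := by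
  have hp : (p : ℤ_[p]) ≠ 0 := PadicInt.prime_p.ne_zero
  let Q₀ : QuadraticForm ℤ_[p] (divisibleSubmodule Q hQ) := Q.comp (Submodule.subtype _)
  by_cases hsq : ∀ x, (p : ℤ_[p]) ^ 2 ∣ Q₀ x
  · obtain ⟨Q', hQ'⟩ := exists_quadraticForm_of_forall_dvd (pow_ne_zero 2 hp) hsq
    let x : divisibleSubmodule Q hQ := ⟨_, smul_mem_divisibleSubmodule hQ e⟩
    refine ⟨2, two_ne_zero, Q', hQ', x, ?_⟩
    have : (p : ℤ_[p]) ^ 2 * Q e = p ^ 2 * Q' x := by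
      rw [← hQ' x, pow_two, ← smul_eq_mul (p * p : ℤ_[p]), ← QuadraticMap.map_smul]
      rfl
    rwa [← mul_left_cancel₀ (pow_ne_zero 2 hp) this]
  · obtain ⟨x, hx⟩ := not_forall.1 hsq
    obtain ⟨Q', hQ'⟩ := exists_quadraticForm_of_forall_dvd hp (Q := Q₀) fun x => x.2
    refine ⟨1, one_ne_zero, Q', fun x => by rw [pow_one]; exact hQ' x, x, fun h => hx ?_⟩
    rw [hQ', pow_two]
    exact mul_dvd_mul_left _ h

theorem exists_solutionSet_divisibleSubmodule_nonempty
    (hQ : AnisotropicModRadical Q) {a : ℤ_[p]}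
    (ha : ¬(p : ℤ_[p]) ∣ a) {v : ℕ} (hv : v ≠ 0) {e x : M} (he : ¬(p : ℤ_[p]) ∣ Q e)
    (hx : x ∈ solutionSet Q ((p : ℤ_[p]) ^ v * a) (v + 3)) :
    ∃ c ≠ 0, ∃ w, v = c + w ∧ ∃ Q' : QuadraticForm ℤ_[p] (divisibleSubmodule Q hQ),
      (∀ y : divisibleSubmodule Q hQ, Q y = (p : ℤ_[p]) ^ c * Q' y) ∧
      (∃ y, ¬(p : ℤ_[p]) ∣ Q' y) ∧ (solutionSet Q' ((p : ℤ_[p]) ^ w * a) (w + 3)).Nonempty := by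
  obtain ⟨c, hc, Q', hQ', hprim⟩ := exists_eq_pow_mul_on_divisibleSubmodule hQ he
  have hpx : (p : ℤ_[p]) ∣ Q x := (dvd_sub_left ((dvd_pow_self _ hv).mul_right a)).1
    ((dvd_pow_self _ (by omega)).trans hx)
  let x' : divisibleSubmodule Q hQ := ⟨x, hpx⟩
  have hx' : (p : ℤ_[p]) ^ (v + 3) ∣ (p : ℤ_[p]) ^ c * Q' x' - p ^ v * a := by
    rw [← hQ' x']
    exact hx
  have hcv : c ≤ v := by
    refine not_lt.1 fun hlt => ha ?_
    have hdvd : (p : ℤ_[p]) ^ (v + 1) ∣ p ^ v * a :=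
      (dvd_sub_right ((pow_dvd_pow _ hlt).mul_right _)).1 ((pow_dvd_pow _ (by omega)).trans hx')
    rw [pow_succ] at hdvd
    exact (mul_dvd_mul_iff_left (pow_ne_zero v PadicInt.prime_p.ne_zero)).1 hdvd
  obtain ⟨w, rfl⟩ := Nat.exists_eq_add_of_le hcv
  refine ⟨c, hc, w, rfl, Q', hQ', hprim, x', ?_⟩
  rwa [add_assoc, pow_add _ c w, mul_assoc, pow_add, ← mul_sub,
    mul_dvd_mul_iff_left (pow_ne_zero c PadicInt.prime_p.ne_zero)] at hx'

theorem image_comp_subtype_solutionSet_subset {G : Type*} [AddCommGroup G] [Module ℤ_[p] G]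
    (φ : M →ₗ[ℤ_[p]] G) {N : Submodule ℤ_[p] M}
    {Q' : QuadraticForm ℤ_[p] N} {c : ℕ} (h : ∀ x : N, Q x = (p : ℤ_[p]) ^ c * Q' x)
    (n : ℤ_[p]) (k : ℕ) :
    (φ ∘ₗ N.subtype) '' solutionSet Q' n k ⊆ φ '' solutionSet Q ((p : ℤ_[p]) ^ c * n) (c + k) := by
  rintro _ ⟨x, hx, rfl⟩
  refine ⟨x, ?_, rfl⟩
  rw [solutionSet, Set.mem_ofPred_eq, h, ← mul_sub, pow_add]
  exact mul_dvd_mul_left _ hx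

theorem eq_two_and_two_dvd_polar_of_dvd_polar
    (hQ : AnisotropicModRadical Q)
    {x : M} (hx : ¬(p : ℤ_[p]) ∣ Q x) (h : ∀ f, (p : ℤ_[p]) ∣ polar Q x f) :
    p = 2 ∧ ∀ w f, (p : ℤ_[p]) ∣ polar Q w f := by
  have hp : p = 2 := by
    have hdvd : (p : ℤ_[p]) ∣ (2 : ℤ) :=
      (PadicInt.prime_p.dvd_or_dvd (by simpa [polar_self] using h x)).resolve_right hx
    rw [← pow_one (p : ℤ_[p]), PadicInt.pow_p_dvd_int_iff, pow_one] at hdvd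
    exact (Nat.prime_dvd_prime_iff_eq Fact.out Nat.prime_two).1 (by exact_mod_cast hdvd)
  refine ⟨hp, fun w f => ?_⟩
  subst hp
  by_cases hw : ((2 : ℕ) : ℤ_[2]) ∣ Q w
  · exact hQ w f hw
  · rw [Nat.cast_ofNat, ← odd_iff_not_two_dvd] at hx hw
    have hxw : ((2 : ℕ) : ℤ_[2]) ∣ Q (x + w) := by
      rw [QuadraticMap.map_add Q]
      exact (hx.add_odd hw).two_dvd.add (h w)
    refine (dvd_add_right (h f)).1 ?_
    rw [← polar_add_left]
    exact hQ _ f hxw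

variable {G : Type*} [AddCommGroup G] [Module ℤ_[p] G] [Finite G] [Module.Free ℤ_[p] M]
  [Module.Finite ℤ_[p] M]

theorem sub_one_mul_ncard_range_le_of_not_dvd_map (hM : Module.finrank ℤ_[p] M ≤ 4)
    (φ : M →ₗ[ℤ_[p]] G)
    (hQ : AnisotropicModRadical Q) {x : M} {n : ℤ_[p]}
    (hx : ¬(p : ℤ_[p]) ∣ Q x) (hxn : x ∈ solutionSet Q n 3) :
    (p - 1) * (Set.range φ).ncard ≤ p ^ 4 * (φ '' solutionSet Q n 3).ncard := by
  by_cases h : ∀ f, (p : ℤ_[p]) ∣ polar Q x f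
  · obtain ⟨rfl, hpolar⟩ := eq_two_and_two_dvd_polar_of_dvd_polar hQ hx h
    rw [Nat.cast_ofNat] at hx hpolar
    simpa using ncard_range_le_sixteen_mul φ hM hpolar (odd_iff_not_two_dvd.2 hx) hxn
  · obtain ⟨f, hf⟩ := not_forall.1 h
    exact sub_one_mul_ncard_range_le_of_not_dvd_polar φ hQ three_ne_zero hxn hf

theorem ncard_range_le_sq_mul_ncard_range_comp_subtype (φ : M →ₗ[ℤ_[p]] G)
    (hQ : AnisotropicModRadical Q) :
    (Set.range φ).ncard ≤
      p ^ 2 * (Set.range (φ ∘ₗ (divisibleSubmodule Q hQ).subtype)).ncard := by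
  refine (ncard_range_le_card_mul_ncard_image_fiber φ.toAddMonoidHom
    (divisibleSubmodule Q hQ).mkQ.toAddMonoidHom 0).trans
    (Nat.mul_le_mul (natCard_quotient_divisibleSubmodule_le hQ) (Set.ncard_le_ncard ?_))
  rintro _ ⟨x, hx, rfl⟩
  exact ⟨⟨x, by simpa using hx⟩, rfl⟩

theorem sub_one_mul_ncard_range_le_of_comp_subtype (φ : M →ₗ[ℤ_[p]] G)
    (hQ : AnisotropicModRadical Q) {Q' : QuadraticForm ℤ_[p] (divisibleSubmodule Q hQ)} {c : ℕ}
    (h : ∀ y : divisibleSubmodule Q hQ, Q y = (p : ℤ_[p]) ^ c * Q' y) {n : ℤ_[p]} {k m : ℕ}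
    (hle : (p - 1) * (Set.range (φ ∘ₗ (divisibleSubmodule Q hQ).subtype)).ncard ≤
      p ^ m * ((φ ∘ₗ (divisibleSubmodule Q hQ).subtype) '' solutionSet Q' n k).ncard) :
    (p - 1) * (Set.range φ).ncard ≤
      p ^ (m + 2) * (φ '' solutionSet Q ((p : ℤ_[p]) ^ c * n) (c + k)).ncard := by
  have hsub := Set.ncard_le_ncard (image_comp_subtype_solutionSet_subset φ h n k)
  calc (p - 1) * (Set.range φ).ncard
      ≤ (p - 1) * (p ^ 2 * (Set.range (φ ∘ₗ (divisibleSubmodule Q hQ).subtype)).ncard) :=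
        Nat.mul_le_mul_left _ (ncard_range_le_sq_mul_ncard_range_comp_subtype φ hQ)
    _ ≤ p ^ 2 * (p ^ m * (φ '' solutionSet Q ((p : ℤ_[p]) ^ c * n) (c + k)).ncard) := by
        rw [mul_left_comm]
        exact Nat.mul_le_mul_left _ (hle.trans (Nat.mul_le_mul_left _ hsub))
    _ = p ^ (m + 2) * (φ '' solutionSet Q ((p : ℤ_[p]) ^ c * n) (c + k)).ncard := by ring

theorem sub_one_mul_ncard_range_le_mul_ncard_image_solutionSet {a : ℤ_[p]}
    (ha : ¬(p : ℤ_[p]) ∣ a) (v : ℕ) (hM : Module.finrank ℤ_[p] M ≤ 4)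
    (φ : M →ₗ[ℤ_[p]] G) {e x : M} (he : ¬(p : ℤ_[p]) ∣ Q e)
    (hx : x ∈ solutionSet Q ((p : ℤ_[p]) ^ v * a) (v + 3)) :
    (p - 1) * (Set.range φ).ncard ≤
      p ^ (2 * v + 4) * (φ '' solutionSet Q ((p : ℤ_[p]) ^ v * a) (v + 3)).ncard := by
  have hp : 0 < p := (Fact.out : p.Prime).pos
  induction v using Nat.strong_induction_on generalizing M with | h v ih
  by_cases hQ : AnisotropicModRadical Q
  swap
  · unfold AnisotropicModRadical at hQ
    push Not at hQ
    obtain ⟨e, f, he, hef⟩ := hQ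
    refine (sub_one_mul_ncard_range_le_of_dvd φ he hef _ (v + 3)).trans (Nat.mul_le_mul_right _ ?_)
    exact Nat.pow_le_pow_right hp (by omega)
  obtain rfl | hv := eq_or_ne v 0
  · refine sub_one_mul_ncard_range_le_of_not_dvd_map hM φ hQ (x := x) (fun h => ha ?_) hx
    rw [← one_mul a, ← pow_zero (p : ℤ_[p])]
    exact (dvd_sub_right h).1 ((dvd_pow_self _ three_ne_zero).trans hx)
  obtain ⟨c, hc, w, rfl, Q', hQ', ⟨y, hy⟩, x', hx'⟩ :=
    exists_solutionSet_divisibleSubmodule_nonempty hQ ha hv he hx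
  have hrec := ih w (by omega) ((Submodule.finrank_le _).trans hM)
    (φ ∘ₗ (divisibleSubmodule Q hQ).subtype) hy hx'
  rw [add_assoc, pow_add _ c w, mul_assoc]
  exact (sub_one_mul_ncard_range_le_of_comp_subtype φ hQ hQ' hrec).trans
    (Nat.mul_le_mul_right _ (Nat.pow_le_pow_right hp (by omega)))

end Bound

section Stability

variable {p : ℕ} [Fact p.Prime] {M : Type*} [AddCommGroup M] [Module ℤ_[p] M]

/-- The number of solutions of the congruence `Q x ≡ n (mod p ^ k)` in `M ⧸ p ^ k M`. -/
noncomputable def solutionCount (Q : QuadraticForm ℤ_[p] M) (n : ℤ_[p]) (k : ℕ) : ℕ :=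
  ((Ideal.span {(p : ℤ_[p]) ^ k} • (⊤ : Submodule ℤ_[p] M)).mkQ '' solutionSet Q n k).ncard

variable {Q : QuadraticForm ℤ_[p] M} {n : ℤ_[p]}

theorem mem_solutionSet_iff_of_sub_mem {k : ℕ} {x y : M}
    (h : x - y ∈ Ideal.span {(p : ℤ_[p]) ^ k} • (⊤ : Submodule ℤ_[p] M)) :
    x ∈ solutionSet Q n k ↔ y ∈ solutionSet Q n k := by
  obtain ⟨z, hz⟩ := mem_span_singleton_smul_top.1 h
  rw [← add_smul_mem_solutionSet_iff (x := y) (y := z) dvd_rfl, hz, add_sub_cancel]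

theorem mkQ_mem_image_solutionSet_iff {k : ℕ} {x : M} :
    (Ideal.span {(p : ℤ_[p]) ^ k} • (⊤ : Submodule ℤ_[p] M)).mkQ x ∈
      (Ideal.span {(p : ℤ_[p]) ^ k} • (⊤ : Submodule ℤ_[p] M)).mkQ '' solutionSet Q n k ↔
    x ∈ solutionSet Q n k := by
  refine ⟨?_, Set.mem_image_of_mem _⟩
  rintro ⟨y, hy, hyx⟩
  exact (mem_solutionSet_iff_of_sub_mem ((Submodule.Quotient.eq _).1 hyx)).1 hy

theorem smul_mem_solutionSet_unit_sq_mul_iff (u : ℤ_[p]ˣ) {k : ℕ} {x : M} :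
    u • x ∈ solutionSet Q ((u : ℤ_[p]) ^ 2 * n) k ↔ x ∈ solutionSet Q n k := by
  rw [solutionSet, Set.mem_ofPred_eq, Units.smul_def, QuadraticMap.map_smul, smul_eq_mul,
    ← pow_two, ← mul_sub]
  exact (u.isUnit.pow 2).dvd_mul_left

open Pointwise in
theorem solutionCount_unit_sq_mul (u : ℤ_[p]ˣ) (k : ℕ) :
    solutionCount Q ((u : ℤ_[p]) ^ 2 * n) k = solutionCount Q n k := by
  have : solutionSet Q ((u : ℤ_[p]) ^ 2 * n) k = u • solutionSet Q n k := by
    ext x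
    rw [Set.mem_smul_set_iff_inv_smul_mem, ← smul_mem_solutionSet_unit_sq_mul_iff (n := n) u,
      smul_inv_smul]
  have himage : (Ideal.span {(p : ℤ_[p]) ^ k} • (⊤ : Submodule ℤ_[p] M)).mkQ ''
      (u • solutionSet Q n k) = u • Submodule.mkQ _ '' solutionSet Q n k :=
    Set.image_comm fun x => rfl
  rw [solutionCount, this, himage, Set.ncard_smul_set, solutionCount]

theorem solutionSet_eq_iUnion (k : ℕ) :
    solutionSet Q n k = ⋃ s : Fin p, solutionSet Q (n + p ^ k * s) (k + 1) := by
  ext x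
  simp only [solutionSet, Set.mem_ofPred_eq, Set.mem_iUnion, pow_succ (p : ℤ_[p]) k,
    ← sub_sub (Q x)]
  constructor
  · rintro ⟨t, ht⟩
    obtain ⟨s, hs, hts⟩ := exists_lt_pow_dvd_sub t 1
    rw [pow_one] at hs hts
    refine ⟨⟨s, hs⟩, ?_⟩
    rw [ht, ← mul_sub]
    exact mul_dvd_mul_left _ hts
  · rintro ⟨s, hs⟩
    exact (dvd_sub_left (dvd_mul_right _ _)).1 ((dvd_mul_right _ _).trans hs)

theorem disjoint_solutionSet {k s t : ℕ} (hs : s < p) (ht : t < p) (hst : s ≠ t) :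
    Disjoint (solutionSet Q (n + p ^ k * s) (k + 1)) (solutionSet Q (n + p ^ k * t) (k + 1)) := by
  refine Set.disjoint_left.2 fun x hxs hxt => hst (Nat.ModEq.eq_of_lt_of_lt (m := p) ?_ hs ht)
  have hdvd : (p : ℤ_[p]) ^ (k + 1) ∣ p ^ k * ((t - s : ℤ) : ℤ_[p]) := by
    convert dvd_sub hxs hxt using 1
    push_cast
    ring
  rw [pow_succ, mul_dvd_mul_iff_left (pow_ne_zero k PadicInt.prime_p.ne_zero),
    ← pow_one (p : ℤ_[p]), PadicInt.pow_p_dvd_int_iff, pow_one] at hdvd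
  exact Nat.modEq_iff_dvd.2 hdvd

variable [Module.Free ℤ_[p] M] [Module.Finite ℤ_[p] M]

theorem ncard_image_solutionSet_eq_sum (Q : QuadraticForm ℤ_[p] M) (n : ℤ_[p]) (k : ℕ) :
    ((Ideal.span {(p : ℤ_[p]) ^ (k + 1)} • (⊤ : Submodule ℤ_[p] M)).mkQ ''
      solutionSet Q n k).ncard = ∑ s : Fin p, solutionCount Q (n + p ^ k * s) (k + 1) := by
  rw [solutionSet_eq_iUnion, Set.image_iUnion, Set.ncard_iUnion_of_finite
    fun _ => Set.toFinite _, finsum_eq_sum_of_fintype]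
  · rfl
  · refine fun s t hst => Set.disjoint_left.2 ?_
    rintro _ ⟨x, hxs, rfl⟩ hxt
    exact Set.disjoint_left.1 (disjoint_solutionSet s.2 t.2 (Fin.val_ne_of_ne hst)) hxs
      (mkQ_mem_image_solutionSet_iff.1 hxt)

theorem ncard_image_solutionSet_eq_pow_mul (Q : QuadraticForm ℤ_[p] M) (n : ℤ_[p]) (k : ℕ) :
    ((Ideal.span {(p : ℤ_[p]) ^ (k + 1)} • (⊤ : Submodule ℤ_[p] M)).mkQ ''
      solutionSet Q n k).ncard = p ^ Module.finrank ℤ_[p] M * solutionCount Q n k := by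
  have hle : Ideal.span {(p : ℤ_[p]) ^ (k + 1)} • (⊤ : Submodule ℤ_[p] M) ≤
      Ideal.span {(p : ℤ_[p]) ^ k} • ⊤ :=
    Submodule.smul_mono_left (Ideal.span_singleton_le_span_singleton.2 (pow_dvd_pow _ k.le_succ))
  have hpre : Submodule.factor hle ⁻¹' (Submodule.mkQ _ '' solutionSet Q n k) =
      Submodule.mkQ _ '' solutionSet Q n k := by
    ext y
    obtain ⟨x, rfl⟩ := Submodule.mkQ_surjective _ y
    rw [Set.mem_preimage, Submodule.factor_mk, mkQ_mem_image_solutionSet_iff]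
    refine ⟨fun hx => Set.mem_image_of_mem _ hx, fun ⟨z, hz, hzx⟩ => ?_⟩
    exact (mem_solutionSet_iff_of_sub_mem (hle ((Submodule.Quotient.eq _).1 hzx))).1 hz
  have hcard := ncard_preimage_mul_card (Submodule.factor hle).toAddMonoidHom
    (Submodule.factor_surjective hle) (Submodule.mkQ _ '' solutionSet Q n k)
  rw [LinearMap.toAddMonoidHom_coe, hpre, natCard_quotient_span_pow_smul_top,
    natCard_quotient_span_pow_smul_top] at hcard
  refine Nat.eq_of_mul_eq_mul_right (pow_pos (Fact.out : p.Prime).pos _) (hcard.trans ?_)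
  rw [solutionCount, add_one_mul, pow_add]
  ring

theorem mul_solutionCount_succ {v : ℕ} {a : ℤ_[p]} (ha : ¬(p : ℤ_[p]) ∣ a) {k : ℕ}
    (hk : v + 3 ≤ k) :
    p * solutionCount Q (p ^ v * a) (k + 1) =
      p ^ Module.finrank ℤ_[p] M * solutionCount Q (p ^ v * a) k := by
  obtain ⟨b, hb⟩ := (padicInt_isUnit_iff_not_dvd.2 ha).exists_right_inv
  obtain ⟨j, rfl⟩ := Nat.exists_eq_add_of_le hk
  have hcount (s : Fin p) : solutionCount Q (p ^ v * a + p ^ (v + 3 + j) * s) (v + 3 + j + 1) =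
      solutionCount Q (p ^ v * a) (v + 3 + j + 1) := by
    obtain ⟨u, hu⟩ := exists_unit_sq_eq_one_add_pow_three_mul
      ((p : ℤ_[p]) ^ j * b * ((s : ℕ) : ℤ_[p]))
    rw [← solutionCount_unit_sq_mul (n := (p : ℤ_[p]) ^ v * a) u, hu]
    congr 1
    linear_combination (-(p : ℤ_[p]) ^ (v + 3 + j) * s) * hb
  rw [← ncard_image_solutionSet_eq_pow_mul, ncard_image_solutionSet_eq_sum,
    Finset.sum_congr rfl fun s _ => hcount s, Finset.sum_const, Finset.card_fin, smul_eq_mul]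

end Stability

section Density

open Filter Topology

variable {p : ℕ} [Fact p.Prime] {M : Type*} [AddCommGroup M] [Module ℤ_[p] M]
  [Module.Free ℤ_[p] M] [Module.Finite ℤ_[p] M] {Q : QuadraticForm ℤ_[p] M} {a : ℤ_[p]}

theorem tendsto_solutionCount_div [Nontrivial M] (ha : ¬(p : ℤ_[p]) ∣ a) (v : ℕ) :
    Tendsto (fun k => (solutionCount Q (p ^ v * a) k : ℝ) /
        (p : ℝ) ^ ((Module.finrank ℤ_[p] M - 1) * k)) atTop
      (𝓝 (solutionCount Q (p ^ v * a) (v + 3) /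
        (p : ℝ) ^ ((Module.finrank ℤ_[p] M - 1) * (v + 3)))) := by
  obtain ⟨d, hd⟩ := Nat.exists_eq_succ_of_ne_zero (Module.finrank_pos (R := ℤ_[p]) (M := M)).ne'
  have hp : p ≠ 0 := (Fact.out : p.Prime).ne_zero
  have hp' : (p : ℝ) ≠ 0 := Nat.cast_ne_zero.2 hp
  rw [hd, Nat.succ_sub_one]
  refine tendsto_atTop_of_eventually_const (i₀ := v + 3) fun k hk => ?_
  induction k, hk using Nat.le_induction with
  | base => rfl
  | succ k hk ih =>
    have hsucc := mul_solutionCount_succ (Q := Q) ha hk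
    rw [hd, pow_succ', mul_assoc, Nat.mul_right_inj hp] at hsucc
    rw [hsucc, ← ih, Nat.cast_mul, Nat.cast_pow, mul_add_one d k, pow_add, mul_comm (_ ^ d)]
    exact mul_div_mul_right _ _ (pow_ne_zero d hp')

theorem one_sub_inv_mul_norm_le_solutionCount_div [Nontrivial M] (ha : ¬(p : ℤ_[p]) ∣ a) (v : ℕ)
    (hM : Module.finrank ℤ_[p] M ≤ 4) {e x : M} (he : ¬(p : ℤ_[p]) ∣ Q e)
    (hx : x ∈ solutionSet Q ((p : ℤ_[p]) ^ v * a) (v + 3)) :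
    (1 - 1 / (p : ℝ)) * ‖(p : ℤ_[p]) ^ v * a‖ ≤ solutionCount Q (p ^ v * a) (v + 3) /
      (p : ℝ) ^ ((Module.finrank ℤ_[p] M - 1) * (v + 3)) := by
  obtain ⟨d, hd⟩ := Nat.exists_eq_succ_of_ne_zero (Module.finrank_pos (R := ℤ_[p]) (M := M)).ne'
  have hp : 0 < (p : ℝ) := Nat.cast_pos.2 (Fact.out : p.Prime).pos
  have hcount := sub_one_mul_ncard_range_le_mul_ncard_image_solutionSet ha v hM
    (Ideal.span {(p : ℤ_[p]) ^ (v + 3)} • (⊤ : Submodule ℤ_[p] M)).mkQ he hx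
  rw [← solutionCount, Set.range_eq_univ.2 (Submodule.mkQ_surjective _), Set.ncard_univ,
    natCard_quotient_span_pow_smul_top, hd] at hcount
  have hcount' : ((p : ℝ) - 1) * p ^ ((v + 3) * (d + 1)) ≤
      p ^ (2 * v + 4) * solutionCount Q (p ^ v * a) (v + 3) := by
    rw [← Nat.cast_pred (Fact.out : p.Prime).pos]
    exact_mod_cast hcount
  rw [hd, Nat.succ_sub_one, norm_mul, PadicInt.norm_p_pow,
    PadicInt.isUnit_iff.1 (padicInt_isUnit_iff_not_dvd.2 ha), mul_one, zpow_neg, zpow_natCast,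
    le_div_iff₀ (by positivity)]
  refine le_of_mul_le_mul_left ?_ (pow_pos hp (2 * v + 4))
  refine le_trans (le_of_eq ?_) hcount'
  field_simp
  ring

end Density

theorem local_density_general_general {p : ℕ} [Fact p.Prime] {M : Type*} [AddCommGroup M]
    [Module ℤ_[p] M] [Module.Free ℤ_[p] M] [Module.Finite ℤ_[p] M]
    (hM : Module.finrank ℤ_[p] M ≤ 4) {Q : QuadraticForm ℤ_[p] M}
    (hQ : ∃ e, ¬(p : ℤ_[p]) ∣ Q e) {n : ℤ_[p]} (hn : n ≠ 0) (h : ∃ x, Q x = n) :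
    ∃ β : ℝ, Filter.Tendsto (fun k => (solutionCount Q n k : ℝ) /
        (p : ℝ) ^ ((Module.finrank ℤ_[p] M - 1) * k)) Filter.atTop (nhds β) ∧
      (1 - 1 / (p : ℝ)) * ‖n‖ ≤ β := by
  obtain ⟨e, he⟩ := hQ
  obtain ⟨x, hx⟩ := h
  have : Nontrivial M := nontrivial_of_ne e 0 fun h0 => he (by simp [h0])
  obtain ⟨v, a, ha, rfl⟩ : ∃ v a, ¬(p : ℤ_[p]) ∣ a ∧ n = p ^ v * a :=
    ⟨n.valuation, PadicInt.unitCoeff hn, padicInt_isUnit_iff_not_dvd.1 (Units.isUnit _), by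
      rw [mul_comm]; exact PadicInt.unitCoeff_spec hn⟩
  exact ⟨_, tendsto_solutionCount_div ha v,
    one_sub_inv_mul_norm_le_solutionCount_div ha v hM he (x := x) ⟨0, by simp [hx]⟩⟩

section Reduction

variable {p : ℕ} [Fact p.Prime]

theorem map_Qval {R S : Type*} [CommRing R] [CommRing S] (f : R →+* S)
    (A : Matrix (Fin 4) (Fin 4) ℤ) (x : Fin 4 → R) : f (Qval A x) = Qval A fun i => f (x i) := by
  simp [Qval]

/-- The quadratic form over `R` with Gram matrix `A`, bundling `Qval A`. -/
def gramForm (R : Type*) [CommRing R] (A : Matrix (Fin 4) (Fin 4) ℤ) :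
    QuadraticForm R (Fin 4 → R) :=
  (Matrix.toBilin' (Matrix.of fun i j =>
    (if i = j then ((A i i / 2 : ℤ) : R) else 0) + if i < j then (A i j : R) else 0)).toQuadraticMap

theorem gramForm_apply {R : Type*} [CommRing R] (A : Matrix (Fin 4) (Fin 4) ℤ) (x : Fin 4 → R) :
    gramForm R A x = Qval A x := by
  simp [gramForm, Qval, ← Finset.filter_lt_eq_Ioi, Finset.sum_filter, Matrix.toBilin'_apply,
    mul_add, Finset.sum_add_distrib, mul_assoc, mul_left_comm, mul_comm, pow_two]

theorem gramForm_single {R : Type*} [CommRing R] (A : Matrix (Fin 4) (Fin 4) ℤ) (i : Fin 4) :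
    gramForm R A (Pi.single i 1) = (A i i / 2 : ℤ) := by
  simp [gramForm]

theorem polar_gramForm_single {R : Type*} [CommRing R] (A : Matrix (Fin 4) (Fin 4) ℤ) {i j : Fin 4}
    (hij : i < j) :
    QuadraticMap.polar (gramForm R A) (Pi.single i 1) (Pi.single j 1) = (A i j : ℤ) := by
  simp [gramForm, LinearMap.BilinMap.polar_toQuadraticMap, hij, hij.ne, hij.ne', hij.not_gt]

theorem localCount_eq_solutionCount (A : Matrix (Fin 4) (Fin 4) ℤ) (n k : ℕ) :
    localCount A p n k = solutionCount (gramForm ℤ_[p] A) n k := by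
  let r : (Fin 4 → ℤ_[p]) → Fin 4 → ZMod (p ^ k) := fun x i => PadicInt.toZModPow k (x i)
  have hr : Function.Surjective r := fun y => by
    choose x hx using fun i => ZMod.ringHom_surjective (PadicInt.toZModPow k) (y i)
    exact ⟨x, funext hx⟩
  have himage : r '' solutionSet (gramForm ℤ_[p] A) n k = {y | Qval A y = (n : ZMod (p ^ k))} := by
    rw [← Set.image_preimage_eq {y | Qval A y = (n : ZMod (p ^ k))} hr]
    congr 1
    ext x
    rw [solutionSet, Set.mem_ofPred_eq, ← padicInt_toZModPow_eq_iff, gramForm_apply, map_Qval,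
      map_natCast]
    rfl
  rw [localCount, ← Set.coe_ofPred, Nat.card_coe_set_eq, ← himage]
  refine ncard_image_eq_of_eq_iff_eq (fun x y => ?_) _
  simp only [r, funext_iff, padicInt_toZModPow_eq_iff]
  rw [Submodule.mkQ_apply, Submodule.mkQ_apply, Submodule.Quotient.eq, mem_span_singleton_smul_top]
  simp only [funext_iff, Pi.smul_apply, smul_eq_mul, Pi.sub_apply, dvd_def, Classical.skolem,
    eq_comm]

theorem exists_not_dvd_gramForm {A : Matrix (Fin 4) (Fin 4) ℤ} (hA : A.IsSymm)
    (hprim : IsPrimitiveQF A) : ∃ e, ¬(p : ℤ_[p]) ∣ gramForm ℤ_[p] A e := by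
  by_contra! h
  have hdvd {m : ℤ} (hm : (p : ℤ_[p]) ∣ m) : (p : ℤ) ∣ m := by
    rwa [← pow_one (p : ℤ_[p]), PadicInt.pow_p_dvd_int_iff, pow_one] at hm
  have hpolar {i j : Fin 4} (hij : i < j) : (p : ℤ) ∣ A i j := hdvd <| by
    rw [← polar_gramForm_single A hij]
    exact dvd_sub (dvd_sub (h _) (h _)) (h _)
  refine (Nat.prime_iff_prime_int.1 (Fact.out : p.Prime)).not_isUnit (hprim p (fun i => hdvd ?_)
    fun i j hij => ?_)
  · rw [← gramForm_single]
    exact h _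
  · obtain hlt | hlt := hij.lt_or_gt
    · exact hpolar hlt
    · rw [← hA.apply]
      exact hpolar hlt

end Reduction

/-- Lemma 2, part 3 (general bound): if `n` is represented over `ℤ_p` then
`β_p(Q;n) ≥ (1 - 1/p) · p^(-ord_p(n))`. -/
theorem local_density_general
    (A : Matrix (Fin 4) (Fin 4) ℤ) (p n : ℕ) [Fact p.Prime]
    (hA : IsGram A) (hprim : IsPrimitiveQF A) (hpd : PosDefQF A) (hn : 0 < n)
    (h : ∃ x : Fin 4 → ℤ_[p], Qval A x = (n : ℤ_[p])) :
    DensityBound A p n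
      ((1 - 1 / (p : ℝ)) * (p : ℝ) ^ (-(n.factorization p : ℝ))) := by
  have hrank : Module.finrank ℤ_[p] (Fin 4 → ℤ_[p]) = 4 := Module.finrank_fin_fun ℤ_[p]
  simpa only [DensityBound, hrank, Nat.add_one_sub_one, ← localCount_eq_solutionCount,
    padicInt_norm_natCast hn.ne']
    using local_density_general_general hrank.le (exists_not_dvd_gramForm hA.1 hprim)
      (Nat.cast_ne_zero.2 hn.ne') (by simpa only [gramForm_apply] using h)
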